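/- arXiv:math/0610370 — 3 statements merged into one kernel-verified Lean document; each statement's English description precedes it below -/
import Mathlib

section
/- Let j₀ = [[0,−1],[1,0]] and let j = g · j₀ · g⁻¹ for some 2×2 real matrix g with det g > 0. Then the matrix σ = I − j·j₀ satisfies: (i) j · σ = σ · j₀, and (ii) det σ > 0, so σ ∈ GL⁺(2,ℝ). (Thus σ(γ) = 1 − j j₀ defines a canonical section of the principal GL(1,ℂ)-bundle GL⁺(2,ℝ) → D.) -/
/-!
If `g J h = c J` with `J ^ 2 = -1` and `c` invertible, then `J g⁻¹ J = -c⁻¹ h`, so that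
`1 - (g J g⁻¹) J = 1 + c⁻¹ g h`. For `h = gᴴ` and `c > 0` this matrix is positive definite. Every
`2 × 2` matrix satisfies `g j₀ gᵀ = (det g) j₀`, because `j₀` is the matrix of an area form.
-/

open Matrix
open scoped ComplexOrder

theorem mul_one_sub_mul_of_mul_self_eq_neg_one {R : Type*} [Ring R] {j k : R}
    (hj : j * j = -1) (hk : k * k = -1) : j * (1 - j * k) = (1 - j * k) * k := by
  calc j * (1 - j * k) = j - j * j * k := by noncomm_ring
    _ = k - j * (k * k) := by rw [hj, hk]; noncomm_ring
    _ = (1 - j * k) * k := by noncomm_ring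

section Similitude

variable {n R : Type*} [Fintype n] [DecidableEq n] [CommRing R] {J g h : Matrix n n R}

theorem conj_mul_self_eq_neg_one (hJ : J * J = -1) (hg : IsUnit g.det) :
    g * J * g⁻¹ * (g * J * g⁻¹) = -1 := by
  calc g * J * g⁻¹ * (g * J * g⁻¹) = g * J * (g⁻¹ * g) * J * g⁻¹ := by simp only [Matrix.mul_assoc]
    _ = g * (J * J) * g⁻¹ := by rw [nonsing_inv_mul g hg, Matrix.mul_one, Matrix.mul_assoc g]
    _ = -1 := by rw [hJ, Matrix.mul_neg, Matrix.mul_one, Matrix.neg_mul, mul_nonsing_inv g hg]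

variable {c : Rˣ}

theorem mul_neg_inv_smul_mul_mul_eq_one (hJ : J * J = -1) (hg : g * J * h = c • J) :
    g * -(c⁻¹ • (J * h * J)) = 1 := by
  calc g * -(c⁻¹ • (J * h * J)) = -(c⁻¹ • (g * J * h * J)) := by
        simp only [Matrix.mul_neg, Matrix.mul_smul, Matrix.mul_assoc]
    _ = 1 := by rw [hg, Matrix.smul_mul, inv_smul_smul, hJ, neg_neg]

theorem one_sub_conj_mul_eq_one_add_smul (hJ : J * J = -1) (hg : g * J * h = c • J) :
    1 - g * J * g⁻¹ * J = 1 + c⁻¹ • (g * h) := by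
  have hinv : g⁻¹ = -(c⁻¹ • (J * h * J)) := inv_eq_right_inv (mul_neg_inv_smul_mul_mul_eq_one hJ hg)
  have hconj : g * J * g⁻¹ * J = -(c⁻¹ • (g * h)) := by
    calc g * J * g⁻¹ * J = -(c⁻¹ • (g * (J * J) * h * (J * J))) := by
          simp only [hinv, Matrix.mul_neg, Matrix.neg_mul, Matrix.mul_smul, Matrix.smul_mul,
            Matrix.mul_assoc]
      _ = -(c⁻¹ • (g * h)) := by
          simp only [hJ, Matrix.mul_neg, Matrix.neg_mul, Matrix.mul_one, neg_neg]
  rw [hconj, sub_neg_eq_add]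

end Similitude

theorem posDef_one_add_smul_mul_conjTranspose {m n 𝕜 : Type*} [Finite m] [DecidableEq m]
    [Fintype n] [RCLike 𝕜] (A : Matrix m n 𝕜) {a : 𝕜} (ha : 0 ≤ a) :
    (1 + a • (A * Aᴴ)).PosDef :=
  PosDef.one.add_posSemidef ((posSemidef_self_mul_conjTranspose A).smul ha)

theorem stmt8_general {n 𝕜 : Type*} [Fintype n] [DecidableEq n] [RCLike 𝕜] {J g : Matrix n n 𝕜}
    {c : 𝕜} (hJ : J * J = -1) (hc : 0 < c) (hg : g * J * gᴴ = c • J) :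
    (g * J * g⁻¹) * (1 - (g * J * g⁻¹) * J) = (1 - (g * J * g⁻¹) * J) * J ∧
      0 < (1 - (g * J * g⁻¹) * J).det := by
  lift c to 𝕜ˣ using hc.ne'.isUnit
  have hdet : IsUnit g.det := isUnit_det_of_right_inverse (mul_neg_inv_smul_mul_mul_eq_one hJ hg)
  refine ⟨mul_one_sub_mul_of_mul_self_eq_neg_one (conj_mul_self_eq_neg_one hJ hdet) hJ, ?_⟩
  rw [one_sub_conj_mul_eq_one_add_smul hJ hg]
  have hc_inv : (0 : 𝕜) ≤ ↑c⁻¹ := by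
    rw [Units.val_inv_eq_inv_val]
    exact (RCLike.inv_pos.mpr hc).le
  exact (posDef_one_add_smul_mul_conjTranspose g hc_inv).det_pos

/-- The standard complex structure `j₀` on the free module of rank two, as a matrix. -/
abbrev stdComplexStructure (R : Type*) [Ring R] : Matrix (Fin 2) (Fin 2) R := !![0, -1; 1, 0]

theorem stdComplexStructure_mul_self (R : Type*) [Ring R] :
    stdComplexStructure R * stdComplexStructure R = -1 := by
  simp [one_fin_two]

theorem mul_stdComplexStructure_mul_transpose {R : Type*} [CommRing R]
    (g : Matrix (Fin 2) (Fin 2) R) :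
    g * stdComplexStructure R * gᵀ = g.det • stdComplexStructure R := by
  ext i k
  fin_cases i <;> fin_cases k <;> simp [mul_apply, det_fin_two] <;> ring

/-- For `j = g j₀ g⁻¹` with `det g > 0`, the matrix `σ = 1 - j j₀` satisfies
`j σ = σ j₀` and `det σ > 0`, i.e. `σ ∈ GL⁺(2,ℝ)`.  (This is the canonical section
`σ(γ) = 1 - j j₀` of the bundle `GL⁺(2,ℝ) → D`.) -/
theorem stmt8 (g : Matrix (Fin 2) (Fin 2) ℝ) (hg : 0 < g.det) :
    (g * !![0, -1; 1, 0] * g⁻¹) * (1 - (g * !![0, -1; 1, 0] * g⁻¹) * !![0, -1; 1, 0]) =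
      (1 - (g * !![0, -1; 1, 0] * g⁻¹) * !![0, -1; 1, 0]) * !![0, -1; 1, 0] ∧
    0 < (1 - (g * !![0, -1; 1, 0] * g⁻¹) * !![0, -1; 1, 0]).det :=
  stmt8_general (stdComplexStructure_mul_self ℝ) hg
    (conjTranspose_eq_transpose_of_trivial g ▸ mul_stdComplexStructure_mul_transpose g)
end

section
/- Let L be a Banach space and W a normed real vector space. Let Q : L → W be a bounded linear map with operator norm at most C, let N : W → L satisfy N(0) = 0 and ‖N(ξ₁) − N(ξ₂)‖ ≤ C₀·(‖ξ₁‖ + ‖ξ₂‖)·‖ξ₁ − ξ₂‖ for all ξ₁, ξ₂ ∈ W, and let e ∈ L with ‖e‖ ≤ ε. Assume δ > 0, C₀·C²·δ < 1/4 and 2ε ≤ δ. Then there exists a unique η in the closed ball {η ∈ L : ‖η‖ ≤ δ} satisfying η + e + N(Q·η) = 0, and this η moreover satisfies ‖η‖ ≤ 2ε. (This is the contraction-mapping construction of the correction term f(u) solving the perturbed ∂̄-equation ∂̄u + η + N_u(Q_u η) = 0.) -/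
/-!
The equation says that `η` is a fixed point of `T η = -e - f η`, where `f = N ∘ Q`. The map `f`
vanishes at `0` and inherits the quadratic estimate from `N`, with constant `K = C₀ C²`. On the
`δ`-ball it is therefore `2Kδ`-Lipschitz and satisfies `‖f η‖ ≤ K ‖η‖²`, so when `Kδ < 1/2` and
`2 ‖e‖ ≤ δ` the map `T` is a contraction of that ball. Absorbing `‖f η‖ ≤ Kδ ‖η‖` into the left-hand
side of `‖η‖ ≤ ‖e‖ + ‖f η‖` gives `‖η‖ ≤ 2 ‖e‖`.
-/

open Function Metric Set
open scoped NNReal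

theorem existsUnique_isFixedPt_of_lipschitzOnWith {X : Type*} [MetricSpace X] {s : Set X}
    {k : ℝ≥0} {T : X → X} (hs : IsComplete s) (hne : s.Nonempty) (hmaps : MapsTo T s s)
    (hk : k < 1) (hT : LipschitzOnWith k T s) : ∃! x, x ∈ s ∧ IsFixedPt T x := by
  have hcontr : ContractingWith k (hmaps.restrict T s s) := ⟨hk, hT.mapsToRestrict hmaps⟩
  obtain ⟨x₀, hx₀⟩ := hne
  obtain ⟨x, hx, hfix, -⟩ := hcontr.exists_fixedPoint' hs hmaps hx₀ (edist_ne_top _ _)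
  refine ⟨x, ⟨hx, hfix⟩, fun y ⟨hy, hfix'⟩ ↦ ?_⟩
  have heq : (⟨y, hy⟩ : s) = ⟨x, hx⟩ :=
    hcontr.fixedPoint_unique' (Subtype.ext hfix') (Subtype.ext hfix)
  exact congrArg Subtype.val heq

theorem norm_le_mul_norm_of_lipschitzOnWith {V E : Type*} [SeminormedAddCommGroup V]
    [SeminormedAddCommGroup E] {C : ℝ≥0} {g : V → E} {s : Set V} (hg : LipschitzOnWith C g s)
    (hg0 : g 0 = 0) (h0 : 0 ∈ s) {x : V} (hx : x ∈ s) : ‖g x‖ ≤ C * ‖x‖ := by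
  simpa only [hg0, sub_zero] using hg.norm_sub_le hx h0

/-- The quadratic-type Lipschitz estimate with constant `K` on a set `s`, as satisfied near `0` by
the remainder of a first-order Taylor expansion at `0`. As in `LipschitzOnWith`, `K : ℝ≥0`. -/
def QuadraticLipschitzOnWith {V E : Type*} [SeminormedAddCommGroup V] [SeminormedAddCommGroup E]
    (K : ℝ≥0) (f : V → E) (s : Set V) : Prop :=
  ∀ ⦃x⦄, x ∈ s → ∀ ⦃y⦄, y ∈ s → ‖f x - f y‖ ≤ K * (‖x‖ + ‖y‖) * ‖x - y‖

namespace QuadraticLipschitzOnWith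

section Seminormed

variable {U V E : Type*} [SeminormedAddCommGroup U] [SeminormedAddCommGroup V]
  [SeminormedAddCommGroup E] {K C r : ℝ≥0} {f : V → E} {g : U → V} {s : Set U} {t : Set V}

theorem norm_le_mul_sq (hf : QuadraticLipschitzOnWith K f t) (hf0 : f 0 = 0) (h0 : 0 ∈ t) {x : V}
    (hx : x ∈ t) : ‖f x‖ ≤ K * ‖x‖ ^ 2 := by
  simpa only [hf0, sub_zero, norm_zero, add_zero, mul_assoc, ← sq] using hf hx h0

theorem lipschitzOnWith_closedBall (hf : QuadraticLipschitzOnWith K f (closedBall 0 r)) :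
    LipschitzOnWith (2 * K * r) f (closedBall 0 r) := by
  refine LipschitzOnWith.of_dist_le_mul fun x hx y hy ↦ ?_
  rw [dist_eq_norm, dist_eq_norm]
  calc ‖f x - f y‖ ≤ K * (‖x‖ + ‖y‖) * ‖x - y‖ := hf hx hy
    _ ≤ K * (r + r) * ‖x - y‖ := by
        gcongr
        exacts [mem_closedBall_zero_iff.1 hx, mem_closedBall_zero_iff.1 hy]
    _ = ↑(2 * K * r) * ‖x - y‖ := by push_cast; ring

theorem comp_lipschitzOnWith (hf : QuadraticLipschitzOnWith K f t) (hg : LipschitzOnWith C g s)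
    (hg0 : g 0 = 0) (h0 : 0 ∈ s) (hst : MapsTo g s t) :
    QuadraticLipschitzOnWith (K * C ^ 2) (f ∘ g) s := by
  intro x hx y hy
  calc ‖f (g x) - f (g y)‖ ≤ K * (‖g x‖ + ‖g y‖) * ‖g x - g y‖ := hf (hst hx) (hst hy)
    _ ≤ K * (C * ‖x‖ + C * ‖y‖) * (C * ‖x - y‖) := by
        gcongr
        exacts [norm_le_mul_norm_of_lipschitzOnWith hg hg0 h0 hx,
          norm_le_mul_norm_of_lipschitzOnWith hg hg0 h0 hy, hg.norm_sub_le hx hy]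
    _ = ↑(K * C ^ 2) * (‖x‖ + ‖y‖) * ‖x - y‖ := by push_cast; ring

end Seminormed

section Equation

variable {E : Type*} [SeminormedAddCommGroup E] {K r : ℝ≥0} {f : E → E} {e : E}

theorem mapsTo_neg_sub_closedBall (hf : QuadraticLipschitzOnWith K f (closedBall 0 r))
    (hf0 : f 0 = 0) (he : ‖e‖ + K * r ^ 2 ≤ r) :
    MapsTo (fun x ↦ -e - f x) (closedBall 0 r) (closedBall 0 r) := by
  intro x hx
  have hxr : ‖x‖ ≤ r := mem_closedBall_zero_iff.1 hx
  rw [mem_closedBall_zero_iff]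
  calc ‖-e - f x‖ ≤ ‖e‖ + ‖f x‖ := by simpa only [norm_neg] using norm_sub_le (-e) (f x)
    _ ≤ ‖e‖ + K * ‖x‖ ^ 2 := by
        gcongr
        exact hf.norm_le_mul_sq hf0 (mem_closedBall_self r.2) hx
    _ ≤ ‖e‖ + K * r ^ 2 := by gcongr
    _ ≤ r := he

theorem one_sub_mul_norm_le_of_add_add_eq_zero (hf : QuadraticLipschitzOnWith K f (closedBall 0 r))
    (hf0 : f 0 = 0) {x : E} (hx : x ∈ closedBall 0 (r : ℝ)) (hsol : x + e + f x = 0) :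
    (1 - K * r) * ‖x‖ ≤ ‖e‖ := by
  have hxr : ‖x‖ ≤ r := mem_closedBall_zero_iff.1 hx
  have hfx : ‖f x‖ ≤ K * r * ‖x‖ :=
    calc ‖f x‖ ≤ K * ‖x‖ ^ 2 := hf.norm_le_mul_sq hf0 (mem_closedBall_self r.2) hx
      _ = K * ‖x‖ * ‖x‖ := by ring
      _ ≤ K * r * ‖x‖ := by gcongr
  have hx_eq : x = -(e + f x) := eq_neg_of_add_eq_zero_left (by rwa [← add_assoc])
  have htri : ‖x‖ ≤ ‖e‖ + ‖f x‖ :=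
    calc ‖x‖ = ‖e + f x‖ := (congrArg norm hx_eq).trans (norm_neg _)
      _ ≤ ‖e‖ + ‖f x‖ := norm_add_le e (f x)
  linarith

end Equation

theorem existsUnique_add_add_eq_zero {E : Type*} [NormedAddCommGroup E] [CompleteSpace E]
    {K r : ℝ≥0} {f : E → E} {e : E} (hf : QuadraticLipschitzOnWith K f (closedBall 0 r))
    (hf0 : f 0 = 0) (hKr : 2 * K * r < 1) (he : ‖e‖ + K * r ^ 2 ≤ r) :
    ∃! x, x ∈ closedBall 0 (r : ℝ) ∧ x + e + f x = 0 := by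
  have hT : LipschitzOnWith (2 * K * r) (fun x ↦ -e - f x) (closedBall 0 r) :=
    LipschitzOnWith.of_dist_le_mul fun x hx y hy ↦ by
      simpa only [dist_sub_left] using hf.lipschitzOnWith_closedBall.dist_le_mul x hx y hy
  have isFixedPt_iff (x : E) : IsFixedPt (fun x ↦ -e - f x) x ↔ x + e + f x = 0 := by
    rw [IsFixedPt, eq_comm, eq_sub_iff_add_eq, eq_neg_iff_add_eq_zero, add_right_comm]
  exact (existsUnique_congr fun x ↦ and_congr_right' (isFixedPt_iff x)).1 <|
    existsUnique_isFixedPt_of_lipschitzOnWith isClosed_closedBall.isComplete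
      ⟨0, mem_closedBall_self r.2⟩ (hf.mapsTo_neg_sub_closedBall hf0 he) hKr hT

end QuadraticLipschitzOnWith

theorem stmt11_general {L W : Type*} [NormedAddCommGroup L] [CompleteSpace L]
    [SeminormedAddCommGroup W] {C C₀ δ : ℝ≥0} {ε : ℝ} {Q : L → W} {N : W → L} {e : L}
    (hQ : LipschitzOnWith C Q (closedBall 0 δ)) (hQ0 : Q 0 = 0)
    (hN : QuadraticLipschitzOnWith C₀ N (closedBall 0 (C * δ))) (hN0 : N 0 = 0) (he : ‖e‖ ≤ ε)
    (hδ : (C₀ * C ^ 2 * δ : ℝ) < 1 / 2) (hεδ : 2 * ε ≤ δ) :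
    ∃ η : L, ‖η‖ ≤ δ ∧ η + e + N (Q η) = 0 ∧ ‖η‖ ≤ 2 * ε ∧
      ∀ η' : L, ‖η'‖ ≤ δ → η' + e + N (Q η') = 0 → η' = η := by
  have h0 : (0 : L) ∈ closedBall 0 (δ : ℝ) := mem_closedBall_self δ.2
  have hmaps : MapsTo Q (closedBall 0 δ) (closedBall 0 (C * δ)) := fun x hx ↦
    mem_closedBall_zero_iff.2 <| (norm_le_mul_norm_of_lipschitzOnWith hQ hQ0 h0 hx).trans <|
      mul_le_mul_of_nonneg_left (mem_closedBall_zero_iff.1 hx) C.2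
  have hf : QuadraticLipschitzOnWith (C₀ * C ^ 2) (N ∘ Q) (closedBall 0 δ) :=
    hN.comp_lipschitzOnWith hQ hQ0 h0 hmaps
  have hf0 : (N ∘ Q) 0 = 0 := by rw [comp_apply, hQ0, hN0]
  have hcontr : 2 * (C₀ * C ^ 2) * δ < 1 := by
    rw [← NNReal.coe_lt_coe]; push_cast; linarith
  have hself : ‖e‖ + ↑(C₀ * C ^ 2) * (δ : ℝ) ^ 2 ≤ δ :=
    calc ‖e‖ + ↑(C₀ * C ^ 2) * (δ : ℝ) ^ 2 = ‖e‖ + C₀ * C ^ 2 * δ * δ := by push_cast; ring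
      _ ≤ ε + 1 / 2 * δ := by gcongr
      _ ≤ δ := by linarith
  obtain ⟨η, ⟨hη, hsol⟩, huniq⟩ := hf.existsUnique_add_add_eq_zero hf0 hcontr hself
  refine ⟨η, mem_closedBall_zero_iff.1 hη, hsol, ?_, fun η' hη' hsol' ↦
    huniq η' ⟨mem_closedBall_zero_iff.2 hη', hsol'⟩⟩
  have hbound : (1 - C₀ * C ^ 2 * δ) * ‖η‖ ≤ ‖e‖ := by
    simpa only [NNReal.coe_mul, NNReal.coe_pow] using
      hf.one_sub_mul_norm_le_of_add_add_eq_zero hf0 hη hsol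
  have habsorb : C₀ * C ^ 2 * δ * ‖η‖ ≤ 1 / 2 * ‖η‖ := by gcongr
  linarith

/-- Contraction-mapping construction of the correction term solving the perturbed
`∂̄`-equation `η + e + N(Qη) = 0`: if `Q` is a bounded linear map of norm `≤ C`, `N` is a
quadratic-type nonlinearity with constant `C₀`, `‖e‖ ≤ ε`, `δ > 0`, `C₀ C² δ < 1/4` and
`2ε ≤ δ`, then there is a unique `η` in the closed `δ`-ball with `η + e + N(Qη) = 0`, and
moreover `‖η‖ ≤ 2ε`. -/
theorem stmt11 {L W : Type*} [NormedAddCommGroup L] [NormedSpace ℝ L] [CompleteSpace L]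
    [NormedAddCommGroup W] [NormedSpace ℝ W]
    (C C₀ ε δ : ℝ) (hC : 0 ≤ C) (hC₀ : 0 ≤ C₀) (hε : 0 ≤ ε)
    (Q : L →L[ℝ] W) (hQ : ‖Q‖ ≤ C)
    (N : W → L) (hN0 : N 0 = 0)
    (hN : ∀ ξ₁ ξ₂ : W, ‖N ξ₁ - N ξ₂‖ ≤ C₀ * (‖ξ₁‖ + ‖ξ₂‖) * ‖ξ₁ - ξ₂‖)
    (e : L) (he : ‖e‖ ≤ ε)
    (hδ : 0 < δ) (h1 : C₀ * C ^ 2 * δ < 1 / 4) (h2 : 2 * ε ≤ δ) :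
    ∃ η : L, ‖η‖ ≤ δ ∧ η + e + N (Q η) = 0 ∧ ‖η‖ ≤ 2 * ε ∧
      ∀ η' : L, ‖η'‖ ≤ δ → η' + e + N (Q η') = 0 → η' = η :=
  stmt11_general (C := ⟨C, hC⟩) (C₀ := ⟨C₀, hC₀⟩) (δ := ⟨δ, hδ.le⟩)
    (Q.lipschitz.weaken hQ).lipschitzOnWith Q.map_zero (fun ξ₁ _ ξ₂ _ ↦ hN ξ₁ ξ₂) hN0 he
    (h1.trans (by norm_num)) h2
end

section
/- Let L be a Banach space and W a normed real vector space, Q : L → W a bounded linear map with operator norm at most C, N : W → L with N(0) = 0 and ‖N(ξ₁) − N(ξ₂)‖ ≤ C₀·(‖ξ₁‖ + ‖ξ₂‖)·‖ξ₁ − ξ₂‖ for all ξ₁, ξ₂, and e ∈ L with ‖e‖ ≤ ε. Assume δ > 0, C₀·C²·δ < 1/4 and 2ε ≤ δ, and define H : L → L by H(η) = −e − N(Q·η). Then: (i) ‖H(η)‖ ≤ δ whenever ‖η‖ ≤ δ; (ii) ‖H(η₁) − H(η₂)‖ ≤ (1/2)·‖η₁ − η₂‖ whenever ‖η₁‖,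 ‖η₂‖ ≤ δ; and (iii) ‖H(η)‖ ≤ 2ε whenever ‖η‖ ≤ 2ε. Hence H is a contraction mapping of the closed δ-ball preserving the closed 2ε-ball. -/
/-!
A quadratic estimate with constant `C₀` becomes one with constant `C₀ * C ^ 2` after precomposition
with a `C`-Lipschitz map fixing the origin, and on the `δ`-ball it gives the Lipschitz constant
`2 * C₀ * C ^ 2 * δ ≤ 1 / 2`. Since `H 0 = -e` lies within `ε` of the origin, the
`1 / 2`-Lipschitz map `H` preserves the ball of every radius `r ≤ δ` with `ε + r / 2 ≤ r`, in
particular for `r = δ` and `r = 2 * ε`.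
-/

open Metric Set
open scoped NNReal

/-- The quadratic estimate `‖f x - f y‖ ≤ K (‖x‖ + ‖y‖) ‖x - y‖` for `x, y ∈ s`, which
abstracts the nonlinear part of a smooth map at the origin. The set `s` allows the estimate to be
required near the origin only. -/
def QuadraticEstimateOn {E F : Type*} [SeminormedAddCommGroup E] [SeminormedAddCommGroup F]
    (K : ℝ) (f : E → F) (s : Set E) : Prop :=
  ∀ ⦃x⦄, x ∈ s → ∀ ⦃y⦄, y ∈ s → ‖f x - f y‖ ≤ K * (‖x‖ + ‖y‖) * ‖x - y‖

namespace QuadraticEstimateOn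

variable {E F G : Type*} [SeminormedAddCommGroup E] [SeminormedAddCommGroup F]
  [SeminormedAddCommGroup G]

theorem comp {K C : ℝ≥0} {f : F → G} {g : E → F} {s : Set E} {t : Set F}
    (hf : QuadraticEstimateOn K f t) (hg : LipschitzOnWith C g s) (hst : MapsTo g s t)
    (hs : 0 ∈ s) (hg0 : g 0 = 0) : QuadraticEstimateOn (K * C ^ 2) (f ∘ g) s := by
  have norm_le {x : E} (hx : x ∈ s) : ‖g x‖ ≤ C * ‖x‖ := by
    simpa only [hg0, sub_zero] using hg.norm_sub_le hx hs
  intro x hx y hy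
  calc ‖f (g x) - f (g y)‖ ≤ K * (‖g x‖ + ‖g y‖) * ‖g x - g y‖ := hf (hst hx) (hst hy)
    _ ≤ K * (C * ‖x‖ + C * ‖y‖) * (C * ‖x - y‖) := by
      gcongr
      exacts [norm_le hx, norm_le hy, hg.norm_sub_le hx hy]
    _ = K * C ^ 2 * (‖x‖ + ‖y‖) * ‖x - y‖ := by ring

theorem lipschitzOnWith_closedBall {K r : ℝ≥0} {f : E → F}
    (hf : QuadraticEstimateOn K f (closedBall 0 r)) :
    LipschitzOnWith (2 * K * r) f (closedBall 0 r) := by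
  refine lipschitzOnWith_iff_norm_sub_le.mpr fun x hx y hy ↦ ?_
  calc ‖f x - f y‖ ≤ K * (‖x‖ + ‖y‖) * ‖x - y‖ := hf hx hy
    _ ≤ K * (r + r) * ‖x - y‖ := by
      gcongr
      exacts [mem_closedBall_zero_iff.mp hx, mem_closedBall_zero_iff.mp hy]
    _ = ↑(2 * K * r) * ‖x - y‖ := by
      push_cast
      ring

theorem lipschitzOnWith_const_sub_comp {K C r : ℝ≥0} {f : F → G} {g : E → F}
    (hf : QuadraticEstimateOn K f (closedBall 0 (C * r)))
    (hg : LipschitzOnWith C g (closedBall 0 r)) (hg0 : g 0 = 0) (c : G) :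
    LipschitzOnWith (2 * (K * C ^ 2) * r) (fun x ↦ c - f (g x)) (closedBall 0 r) := by
  have h0 : (0 : E) ∈ closedBall 0 (r : ℝ) := mem_closedBall_self r.coe_nonneg
  have hst : MapsTo g (closedBall 0 r) (closedBall 0 (C * r)) := fun x hx ↦ by
    simpa only [mem_closedBall_zero_iff, hg0, sub_zero] using
      hg.norm_sub_le_of_le hx h0 (by simpa only [sub_zero, mem_closedBall_zero_iff] using hx)
  have hfg : QuadraticEstimateOn ↑(K * C ^ 2) (f ∘ g) (closedBall 0 r) := by
    exact_mod_cast hf.comp hg hst h0 hg0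
  simpa only [zero_add, Function.comp_apply] using
    (LipschitzWith.const c).lipschitzOnWith.sub hfg.lipschitzOnWith_closedBall

end QuadraticEstimateOn

theorem mapsTo_closedBall_of_lipschitzOnWith {X : Type*} [PseudoMetricSpace X] {K : ℝ≥0}
    {f : X → X} {x : X} {r : ℝ} (hf : LipschitzOnWith K f (closedBall x r))
    (hx : dist (f x) x + K * r ≤ r) : MapsTo f (closedBall x r) (closedBall x r) := by
  intro y hy
  calc dist (f y) x ≤ dist (f y) (f x) + dist (f x) x := dist_triangle _ _ _
    _ ≤ K * dist y x + dist (f x) x := by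
      gcongr
      exact hf.dist_le_mul y hy x (mem_closedBall_self (dist_nonneg.trans hy))
    _ ≤ K * r + dist (f x) x := by
      gcongr
      exact hy
    _ ≤ r := by rwa [add_comm]

theorem stmt12_general {L W : Type*} [SeminormedAddCommGroup L] [SeminormedAddCommGroup W]
    {C C₀ ε δ : ℝ} (hC : 0 ≤ C) (hC₀ : 0 ≤ C₀) {Q : L → W} (hQ0 : Q 0 = 0)
    (hQ : ∀ η₁ η₂ : L, ‖η₁‖ ≤ δ → ‖η₂‖ ≤ δ → ‖Q η₁ - Q η₂‖ ≤ C * ‖η₁ - η₂‖)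
    {N : W → L} (hN0 : N 0 = 0) (hN : QuadraticEstimateOn C₀ N (closedBall 0 (C * δ)))
    {e : L} (he : ‖e‖ ≤ ε) (h1 : C₀ * C ^ 2 * δ ≤ 1 / 4) (h2 : 2 * ε ≤ δ) :
    (∀ η : L, ‖η‖ ≤ δ → ‖-e - N (Q η)‖ ≤ δ) ∧
    (∀ η₁ η₂ : L, ‖η₁‖ ≤ δ → ‖η₂‖ ≤ δ →
      ‖(-e - N (Q η₁)) - (-e - N (Q η₂))‖ ≤ (1 / 2) * ‖η₁ - η₂‖) ∧
    (∀ η : L, ‖η‖ ≤ 2 * ε → ‖-e - N (Q η)‖ ≤ 2 * ε) := by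
  have hε : 0 ≤ ε := (norm_nonneg e).trans he
  lift C to ℝ≥0 using hC
  lift C₀ to ℝ≥0 using hC₀
  lift δ to ℝ≥0 using by linarith
  set H : L → L := fun η ↦ -e - N (Q η)
  have hQL : LipschitzOnWith C Q (closedBall 0 δ) :=
    lipschitzOnWith_iff_norm_sub_le.mpr fun η₁ h₁ η₂ h₂ ↦
      hQ η₁ η₂ (mem_closedBall_zero_iff.mp h₁) (mem_closedBall_zero_iff.mp h₂)
  have hk : 2 * (C₀ * C ^ 2) * δ ≤ (1 / 2 : ℝ≥0) := by
    rw [← NNReal.coe_le_coe]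
    push_cast
    linarith
  have hH : LipschitzOnWith (1 / 2) H (closedBall 0 δ) :=
    (hN.lipschitzOnWith_const_sub_comp hQL hQ0 (-e)).weaken hk
  have hH0 : dist (H 0) 0 ≤ ε := by simpa [H, hQ0, hN0] using he
  have hball {r : ℝ} (hεr : 2 * ε ≤ r) (hrδ : r ≤ δ) (η : L) (hη : ‖η‖ ≤ r) : ‖H η‖ ≤ r := by
    have hmaps : MapsTo H (closedBall 0 r) (closedBall 0 r) :=
      mapsTo_closedBall_of_lipschitzOnWith (hH.mono (closedBall_subset_closedBall hrδ))
        (by push_cast; linarith)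
    exact mem_closedBall_zero_iff.mp (hmaps (mem_closedBall_zero_iff.mpr hη))
  refine ⟨hball h2 le_rfl, fun η₁ η₂ h₁ h₂ ↦ ?_, hball le_rfl h2⟩
  simpa only [H, NNReal.coe_div, NNReal.coe_one, NNReal.coe_ofNat] using
    hH.norm_sub_le (mem_closedBall_zero_iff.mpr h₁) (mem_closedBall_zero_iff.mpr h₂)

/-- The map `H(η) = -e - N(Qη)` is a contraction of the closed `δ`-ball preserving the
closed `2ε`-ball: (i) it maps the `δ`-ball to itself, (ii) it is `1/2`-Lipschitz on the
`δ`-ball, (iii) it maps the `2ε`-ball to itself. -/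
theorem stmt12 {L W : Type*} [NormedAddCommGroup L] [NormedSpace ℝ L] [CompleteSpace L]
    [NormedAddCommGroup W] [NormedSpace ℝ W]
    (C C₀ ε δ : ℝ) (hC : 0 ≤ C) (hC₀ : 0 ≤ C₀) (hε : 0 ≤ ε)
    (Q : L →L[ℝ] W) (hQ : ‖Q‖ ≤ C)
    (N : W → L) (hN0 : N 0 = 0)
    (hN : ∀ ξ₁ ξ₂ : W, ‖N ξ₁ - N ξ₂‖ ≤ C₀ * (‖ξ₁‖ + ‖ξ₂‖) * ‖ξ₁ - ξ₂‖)
    (e : L) (he : ‖e‖ ≤ ε)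
    (hδ : 0 < δ) (h1 : C₀ * C ^ 2 * δ < 1 / 4) (h2 : 2 * ε ≤ δ) :
    (∀ η : L, ‖η‖ ≤ δ → ‖-e - N (Q η)‖ ≤ δ) ∧
    (∀ η₁ η₂ : L, ‖η₁‖ ≤ δ → ‖η₂‖ ≤ δ →
      ‖(-e - N (Q η₁)) - (-e - N (Q η₂))‖ ≤ (1 / 2) * ‖η₁ - η₂‖) ∧
    (∀ η : L, ‖η‖ ≤ 2 * ε → ‖-e - N (Q η)‖ ≤ 2 * ε) :=
  stmt12_general hC hC₀ (map_zero Q)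
    (fun η₁ η₂ _ _ ↦ map_sub Q η₁ η₂ ▸ Q.le_of_opNorm_le hQ (η₁ - η₂)) hN0
    (fun ξ₁ _ ξ₂ _ ↦ hN ξ₁ ξ₂) he h1.le h2
end
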